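/- arXiv:2208.05268 — 2 statements merged into one kernel-verified Lean document; each statement's English description precedes it below -/
import Mathlib

section
/- Let B be a real Banach space and let f : B → ℝ ∪ {+∞} be any function that admits at least one continuous affine minorant. Then the biconjugate x ↦ sup_{y ∈ B*} (⟨y, x⟩ − f*(y)), where f*(y) = sup_{x' ∈ B} (⟨y, x'⟩ − f(x')), is the largest convex lower semicontinuous function that is everywhere less than or equal to f; that is, it is a convex lower semicontinuous minorant of f, and every convex lower semicontinuous function g with g ≤ f satisfies g ≤ f** pointwise. -/
/-- Convexity for `EReal`-valued functions on a real vector space. -/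
def ConvexE {B : Type*} [AddCommGroup B] [Module ℝ B] (f : B → EReal) : Prop :=
  ∀ x y : B, ∀ a b : ℝ, 0 ≤ a → 0 ≤ b → a + b = 1 →
    f (a • x + b • y) ≤ (a : EReal) * f x + (b : EReal) * f y

/-- The biconjugate of `f : B → EReal`, computed through the dual pairing. -/
noncomputable def biconj {B : Type*} [NormedAddCommGroup B] [NormedSpace ℝ B]
    (f : B → EReal) : B → EReal :=
  fun x => ⨆ y : B →L[ℝ] ℝ, ((y x : EReal) - ⨆ x' : B, ((y x' : EReal) - f x'))

/-!
Let `g` be convex, lower semicontinuous and proper. A real number `r < g x₀` is a point `(x₀, r)`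
below the closed convex epigraph of `g`, so it can be strictly separated from that epigraph. The
separating hyperplane may be vertical, in which case it is not the graph of an affine function;
adding a large multiple of its equation to that of a nonvertical hyperplane below the epigraph,
which exists under any point where `g` is finite, tilts it into the graph of a continuous affine
minorant of `g` that reaches height `r` above `x₀`. Hence `g` is the supremum of its continuous
affine minorants, each of which lies below `g**`, and `g = g**`. If `g ≤ f`, then `g = g** ≤ f**`
since biconjugation is monotone.
-/

section Conjugate

variable {E : Type*} [AddCommGroup E] [Module ℝ E] [TopologicalSpace E]

/-- The Fenchel conjugate `f*`, on the continuous dual of a real topological vector space. -/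
noncomputable def fenchelConj (f : E → EReal) (y : E →L[ℝ] ℝ) : EReal :=
  ⨆ x, ((y x : EReal) - f x)

/-- The Fenchel biconjugate `f**`, taken on `E` itself rather than on its bidual. It extends
`biconj` from normed spaces to topological vector spaces, and is definitionally equal to it on the
former. -/
noncomputable def fenchelBiconj (f : E → EReal) (x : E) : EReal :=
  ⨆ y : E →L[ℝ] ℝ, ((y x : EReal) - fenchelConj f y)

theorem fenchelConj_anti {f g : E → EReal} (hgf : ∀ x, g x ≤ f x) (y : E →L[ℝ] ℝ) :
    fenchelConj f y ≤ fenchelConj g y :=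
  iSup_mono fun x => EReal.sub_le_sub le_rfl (hgf x)

theorem fenchelBiconj_mono {f g : E → EReal} (hgf : ∀ x, g x ≤ f x) (x : E) :
    fenchelBiconj g x ≤ fenchelBiconj f x :=
  iSup_mono fun y => EReal.sub_le_sub le_rfl (fenchelConj_anti hgf y)

theorem ereal_coe_sub_coe_sub_self (r : ℝ) (v : EReal) : (r : EReal) - (r - v) = v := by
  induction v with
  | bot => simp
  | top => simp
  | coe v => rw [← EReal.coe_sub, ← EReal.coe_sub, sub_sub_cancel]

theorem fenchelBiconj_le (f : E → EReal) (x : E) : fenchelBiconj f x ≤ f x :=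
  iSup_le fun y => calc
    (y x : EReal) - fenchelConj f y ≤ y x - (y x - f x) :=
      EReal.sub_le_sub le_rfl (le_iSup (fun x' => (y x' : EReal) - f x') x)
    _ = f x := ereal_coe_sub_coe_sub_self (y x) (f x)

theorem fenchelConj_le_of_affine_minorant {f : E → EReal} {y : E →L[ℝ] ℝ} {a : ℝ}
    (h : ∀ x, ((y x + a : ℝ) : EReal) ≤ f x) : fenchelConj f y ≤ ((-a : ℝ) : EReal) :=
  iSup_le fun x => calc
    (y x : EReal) - f x ≤ y x - ((y x + a : ℝ) : EReal) := EReal.sub_le_sub le_rfl (h x)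
    _ = ((-a : ℝ) : EReal) := by rw [← EReal.coe_sub, sub_add_cancel_left]

theorem affine_minorant_le_fenchelBiconj {f : E → EReal} {y : E →L[ℝ] ℝ} {a : ℝ}
    (h : ∀ x, ((y x + a : ℝ) : EReal) ≤ f x) (x : E) :
    ((y x + a : ℝ) : EReal) ≤ fenchelBiconj f x := calc
  ((y x + a : ℝ) : EReal) = y x - ((-a : ℝ) : EReal) := by rw [← EReal.coe_sub, sub_neg_eq_add]
  _ ≤ y x - fenchelConj f y := EReal.sub_le_sub le_rfl (fenchelConj_le_of_affine_minorant h)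
  _ ≤ fenchelBiconj f x := le_iSup (fun y : E →L[ℝ] ℝ => (y x : EReal) - fenchelConj f y) y

end Conjugate

section Regularity

variable {E : Type*} [AddCommGroup E] [Module ℝ E]

theorem convexE_iSup {ι : Sort*} {f : ι → E → EReal} (hf : ∀ i, ConvexE (f i)) :
    ConvexE fun x => ⨆ i, f i x := by
  intro x y a b ha hb hab
  refine iSup_le fun i => (hf i x y a b ha hb hab).trans (add_le_add ?_ ?_)
  · exact mul_le_mul_of_nonneg_left (le_iSup (f · x) i) (EReal.coe_nonneg.2 ha)
  · exact mul_le_mul_of_nonneg_left (le_iSup (f · y) i) (EReal.coe_nonneg.2 hb)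

theorem convexE_linear_sub_const (φ : E →ₗ[ℝ] ℝ) (c : EReal) :
    ConvexE fun x => (φ x : EReal) - c := by
  intro x y a b ha hb hab
  induction c with
  | bot =>
    have h : (a : EReal) * ⊤ + b * ⊤ = ⊤ := by
      rw [← EReal.right_distrib_of_nonneg (EReal.coe_nonneg.2 ha) (EReal.coe_nonneg.2 hb),
        ← EReal.coe_add, hab, EReal.coe_one, one_mul]
    simp only [EReal.coe_sub_bot, h, le_refl]
  | top => simp only [EReal.sub_top, bot_le]
  | coe c =>
    have h : φ (a • x + b • y) - c = a * (φ x - c) + b * (φ y - c) := by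
      simp only [map_add, map_smul, smul_eq_mul]
      linear_combination c * hab
    simp only [← EReal.coe_sub, ← EReal.coe_mul, ← EReal.coe_add, h, le_refl]

theorem ConvexE.convex_epigraph {g : E → EReal} (hg : ConvexE g) :
    Convex ℝ {p : E × ℝ | g p.1 ≤ p.2} := by
  rintro ⟨x, s⟩ hx ⟨y, t⟩ hy a b ha hb hab
  calc
    g (a • x + b • y) ≤ a * g x + b * g y := hg x y a b ha hb hab
    _ ≤ a * s + b * t :=
      add_le_add (mul_le_mul_of_nonneg_left hx (EReal.coe_nonneg.2 ha))
        (mul_le_mul_of_nonneg_left hy (EReal.coe_nonneg.2 hb))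
    _ = ((a * s + b * t : ℝ) : EReal) := by push_cast; rfl

variable [TopologicalSpace E]

theorem continuous_coe_dual_sub_const (y : E →L[ℝ] ℝ) (c : EReal) :
    Continuous fun x => (y x : EReal) - c := by
  induction c with
  | bot => simpa only [EReal.coe_sub_bot] using continuous_const
  | top => simpa only [EReal.sub_top] using continuous_const
  | coe c =>
    simp only [← EReal.coe_sub, EReal.continuous_coe_iff]
    fun_prop

theorem convexE_fenchelBiconj (f : E → EReal) : ConvexE (fenchelBiconj f) :=
  convexE_iSup fun y => convexE_linear_sub_const y.toLinearMap (fenchelConj f y)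

theorem lowerSemicontinuous_fenchelBiconj (f : E → EReal) :
    LowerSemicontinuous (fenchelBiconj f) :=
  lowerSemicontinuous_iSup fun y =>
    (continuous_coe_dual_sub_const y (fenchelConj f y)).lowerSemicontinuous

theorem isClosed_real_epigraph {X : Type*} [TopologicalSpace X] {g : X → EReal}
    (hg : LowerSemicontinuous g) : IsClosed {p : X × ℝ | g p.1 ≤ p.2} :=
  hg.isClosed_epigraph.preimage
    (continuous_fst.prodMk (continuous_coe_real_ereal.comp continuous_snd))

end Regularity

section FenchelMoreau

variable {E : Type*} [AddCommGroup E] [Module ℝ E] [TopologicalSpace E]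

theorem exists_affine_minorant_of_halfspace {g : E → EReal} {φ : E →L[ℝ] ℝ} {s u : ℝ}
    (hs : 0 < s) (hepi : ∀ (x : E) (t : ℝ), g x ≤ t → u ≤ φ x + s * t)
    {x₀ : E} {r : ℝ} (hr : φ x₀ + s * r ≤ u) :
    ∃ (y : E →L[ℝ] ℝ) (a : ℝ), (∀ x, ((y x + a : ℝ) : EReal) ≤ g x) ∧ r ≤ y x₀ + a := by
  have affine_eq (x : E) : (-s⁻¹ • φ) x + u / s = (u - φ x) / s := by
    simp only [smul_apply, smul_eq_mul]
    ring
  refine ⟨-s⁻¹ • φ, u / s, fun x => EReal.le_of_forall_lt_iff_le.1 fun t ht => ?_, ?_⟩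
  · rw [affine_eq, EReal.coe_le_coe_iff, div_le_iff₀ hs]
    linarith [hepi x t ht.le]
  · rw [affine_eq, le_div_iff₀ hs]
    linarith

theorem nonneg_of_le_add_mul_of_ge {𝕜 : Type*} [Field 𝕜] [LinearOrder 𝕜] [IsStrictOrderedRing 𝕜]
    {c s t₁ u : 𝕜} (h : ∀ t, t₁ ≤ t → u ≤ c + s * t) : 0 ≤ s := by
  by_contra! hs
  have hu := h (max t₁ ((u - c) / s + 1)) (le_max_left _ _)
  have hle : s * max t₁ ((u - c) / s + 1) ≤ s * ((u - c) / s + 1) :=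
    mul_le_mul_of_nonpos_left (le_max_right _ _) hs.le
  rw [mul_add, mul_div_cancel₀ _ hs.ne] at hle
  linarith

variable [IsTopologicalAddGroup E] [ContinuousSMul ℝ E] [LocallyConvexSpace ℝ E]

theorem ConvexE.exists_epigraph_halfspace_of_lt {g : E → EReal} (hg : ConvexE g)
    (hl : LowerSemicontinuous g) {x₁ : E} (hx₁ : g x₁ ≠ ⊤) {x₀ : E} {r : ℝ}
    (hr : (r : EReal) < g x₀) :
    ∃ (φ : E →L[ℝ] ℝ) (s u : ℝ), 0 ≤ s ∧ φ x₀ + s * r < u ∧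
      ∀ (x : E) (t : ℝ), g x ≤ t → u ≤ φ x + s * t := by
  obtain ⟨F, u, hF₀, hF⟩ := geometric_hahn_banach_point_closed (x := (x₀, r)) hg.convex_epigraph
    (isClosed_real_epigraph hl) hr.not_ge
  have F_apply (x : E) (t : ℝ) : F (x, t) = F (x, 0) + F (0, 1) * t := by
    have h : ((x, t) : E × ℝ) = (x, 0) + t • (0, 1) := by simp
    rw [h, map_add, map_smul, smul_eq_mul, mul_comm]
  have hepi (x : E) (t : ℝ) (hxt : g x ≤ t) : u ≤ F (x, 0) + F (0, 1) * t :=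
    F_apply x t ▸ (hF (x, t) hxt).le
  have hs : 0 ≤ F (0, 1) := nonneg_of_le_add_mul_of_ge fun t ht =>
    hepi x₁ t ((EReal.le_coe_toReal hx₁).trans (EReal.coe_le_coe_iff.2 ht))
  exact ⟨F.comp (ContinuousLinearMap.inl ℝ E ℝ), F (0, 1), u, hs, F_apply x₀ r ▸ hF₀, hepi⟩

theorem ConvexE.exists_affine_minorant {g : E → EReal} (hg : ConvexE g)
    (hl : LowerSemicontinuous g) {x₁ : E} {t₁ : ℝ} (hx₁ : g x₁ = t₁) :
    ∃ (y : E →L[ℝ] ℝ) (a : ℝ), ∀ x, ((y x + a : ℝ) : EReal) ≤ g x := by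
  have below : ((t₁ - 1 : ℝ) : EReal) < g x₁ := by
    rw [hx₁, EReal.coe_lt_coe_iff]
    exact sub_one_lt t₁
  obtain ⟨φ, s, u, -, hlt, hepi⟩ :=
    hg.exists_epigraph_halfspace_of_lt hl (hx₁ ▸ EReal.coe_ne_top t₁) below
  have hs : 0 < s := by linarith [hepi x₁ t₁ hx₁.le]
  obtain ⟨y, a, hya, -⟩ := exists_affine_minorant_of_halfspace hs hepi hlt.le
  exact ⟨y, a, hya⟩

theorem ConvexE.exists_affine_minorant_ge {g : E → EReal} (hg : ConvexE g)
    (hl : LowerSemicontinuous g) (hbot : ∀ x, g x ≠ ⊥) {x₀ : E} {r : ℝ}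
    (hr : (r : EReal) < g x₀) :
    ∃ (y : E →L[ℝ] ℝ) (a : ℝ), (∀ x, ((y x + a : ℝ) : EReal) ≤ g x) ∧ r ≤ y x₀ + a := by
  by_cases htop : ∀ x, g x = ⊤
  · exact ⟨0, r, fun x => htop x ▸ le_top, by simp⟩
  push Not at htop
  obtain ⟨x₁, hx₁⟩ := htop
  obtain ⟨y, a, hya⟩ := hg.exists_affine_minorant hl (EReal.coe_toReal hx₁ (hbot x₁)).symm
  obtain ⟨φ, s, u, hs, hlt, hepi⟩ := hg.exists_epigraph_halfspace_of_lt hl hx₁ hr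
  obtain ⟨k, hk⟩ := Archimedean.arch (r - (y x₀ + a)) (sub_pos.2 hlt)
  rw [nsmul_eq_mul] at hk
  -- The sum of `y x + a ≤ t` and `k` times `u ≤ φ x + s * t` is nonvertical even if `s = 0`.
  refine exists_affine_minorant_of_halfspace (φ := (k : ℝ) • φ - y) (s := k * s + 1)
    (u := k * u + a) (by positivity) (fun x t hxt => ?_) ?_
  · have hminorant : y x + a ≤ t := EReal.coe_le_coe_iff.1 ((hya x).trans hxt)
    have hhalfspace : k * u ≤ k * (φ x + s * t) :=
      mul_le_mul_of_nonneg_left (hepi x t hxt) k.cast_nonneg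
    simp only [sub_apply, smul_apply, smul_eq_mul]
    linarith
  · simp only [sub_apply, smul_apply, smul_eq_mul]
    linarith

theorem ConvexE.fenchelBiconj_eq {g : E → EReal} (hg : ConvexE g) (hl : LowerSemicontinuous g)
    (hbot : ∀ x, g x ≠ ⊥) : fenchelBiconj g = g := by
  refine funext fun x => (fenchelBiconj_le g x).antisymm ?_
  refine EReal.ge_of_forall_gt_iff_ge.1 fun r hr => ?_
  obtain ⟨y, a, hya, hra⟩ := hg.exists_affine_minorant_ge hl hbot hr
  exact (EReal.coe_le_coe_iff.2 hra).trans (affine_minorant_le_fenchelBiconj hya x)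

end FenchelMoreau

theorem stmt2_general {E : Type*} [AddCommGroup E] [Module ℝ E] [TopologicalSpace E]
    [IsTopologicalAddGroup E] [ContinuousSMul ℝ E] [LocallyConvexSpace ℝ E] (f : E → EReal) :
    ConvexE (fenchelBiconj f) ∧ LowerSemicontinuous (fenchelBiconj f) ∧
    (∀ x, fenchelBiconj f x ≤ f x) ∧
    (∀ g : E → EReal, (∀ x, g x ≠ ⊥) → ConvexE g → LowerSemicontinuous g →
      (∀ x, g x ≤ f x) → ∀ x, g x ≤ fenchelBiconj f x) := by
  refine ⟨convexE_fenchelBiconj f, lowerSemicontinuous_fenchelBiconj f, fenchelBiconj_le f, ?_⟩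
  intro g hbot hg hl hgf x
  calc
    g x = fenchelBiconj g x := by rw [hg.fenchelBiconj_eq hl hbot]
    _ ≤ fenchelBiconj f x := fenchelBiconj_mono hgf x

/-- if `f : B → ℝ ∪ {+∞}` admits a continuous affine minorant, then its
biconjugate is the largest convex lower semicontinuous minorant of `f`. -/
theorem stmt2 {B : Type*} [NormedAddCommGroup B] [NormedSpace ℝ B] [CompleteSpace B]
    (f : B → EReal) (hbot : ∀ x, f x ≠ ⊥)
    (hminorant : ∃ (y : B →L[ℝ] ℝ) (a : ℝ), ∀ x, ((y x + a : ℝ) : EReal) ≤ f x) :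
    ConvexE (biconj f) ∧ LowerSemicontinuous (biconj f) ∧
    (∀ x, biconj f x ≤ f x) ∧
    (∀ g : B → EReal, (∀ x, g x ≠ ⊥) → ConvexE g → LowerSemicontinuous g →
      (∀ x, g x ≤ f x) → ∀ x, g x ≤ biconj f x) :=
  stmt2_general f
end

section
/- Let H be a real Hilbert space, let f : H → ℝ ∪ {+∞} be proper, convex, and lower semicontinuous, and let ε > 0. Then the Moreau envelope ᵋf : H → ℝ is Fréchet differentiable at every x ∈ H, with gradient ∇ᵋf(x) = ε⁻¹( x − Prox_{εf}(x) ), and the gradient map x ↦ ∇ᵋf(x) is Lipschitz continuous with constant ε⁻¹. -/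
/-- `p` minimizes `z ↦ f z + (1/(2ε))‖x - z‖²` over `H`, i.e. `p = Prox_{εf}(x)`. -/
def IsProxPt {H : Type*} [NormedAddCommGroup H] [InnerProductSpace ℝ H]
    (f : H → EReal) (ε : ℝ) (x p : H) : Prop :=
  ∀ z : H, f p + ((1 / (2 * ε) * ‖x - p‖ ^ 2 : ℝ) : EReal)
    ≤ f z + ((1 / (2 * ε) * ‖x - z‖ ^ 2 : ℝ) : EReal)

open scoped Topology InnerProductSpace

theorem hasFDerivAt_of_norm_sub_le_mul_sq {𝕜 E F : Type*} [NontriviallyNormedField 𝕜]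
    [NormedAddCommGroup E] [NormedSpace 𝕜 E] [NormedAddCommGroup F] [NormedSpace 𝕜 F]
    {u : E → F} {L : E →L[𝕜] F} {x : E} {C : ℝ}
    (h : ∀ y, ‖u y - u x - L (y - x)‖ ≤ C * ‖y - x‖ ^ 2) : HasFDerivAt u L x := by
  have hO : (fun y ↦ u y - u x - L (y - x)) =O[𝓝 x] fun y ↦ ‖y - x‖ ^ 2 :=
    .of_bound C <| .of_forall fun y ↦ by simpa only [norm_pow, norm_norm] using h y
  exact .of_isLittleO <| hO.trans_isLittleO <| Asymptotics.isLittleO_pow_sub_sub x one_lt_two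

section

variable {H : Type*} [NormedAddCommGroup H] [InnerProductSpace ℝ H]

theorem norm_le_norm_add_of_inner_nonneg {v w : H} (h : 0 ≤ ⟪v, w⟫_ℝ) : ‖v‖ ≤ ‖v + w‖ := by
  refine (sq_le_sq₀ (norm_nonneg _) (norm_nonneg _)).mp ?_
  linarith [norm_add_sq_real v w, sq_nonneg ‖w‖]

theorem one_div_two_mul_norm_add_sq (ε : ℝ) (v w : H) :
    1 / (2 * ε) * ‖v + w‖ ^ 2 =
      1 / (2 * ε) * ‖v‖ ^ 2 + ⟪ε⁻¹ • v, w⟫_ℝ + 1 / (2 * ε) * ‖w‖ ^ 2 := by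
  rw [norm_add_sq_real, real_inner_smul_left]
  ring

/-- `g` belongs to the subdifferential of `f` at `x`. An infinite value `f x` is not excluded: every
`g` is a subgradient where `f x = ⊥`, and where `f x = ⊤` one exists only if `f` is constant. -/
def IsSubgradientAt (f : H → EReal) (g x : H) : Prop :=
  ∀ y : H, f x + (⟪g, y - x⟫_ℝ : ℝ) ≤ f y

/-- The Moreau envelope `ᵋf`. It takes values in `EReal`, so that `IsSubgradientAt` applies to it
and no finiteness of the infimum has to be assumed. -/
noncomputable def moreauEnvelope (f : H → EReal) (ε : ℝ) (x : H) : EReal :=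
  ⨅ z : H, f z + ((1 / (2 * ε) * ‖x - z‖ ^ 2 : ℝ) : EReal)

variable {f : H → EReal} {ε : ℝ} {x x' p p' : H}

theorem IsSubgradientAt.inner_sub_sub_nonneg {g g' : H} (h : IsSubgradientAt f g x)
    (h' : IsSubgradientAt f g' x') (hbot : f x ≠ ⊥) (htop : f x ≠ ⊤) :
    0 ≤ ⟪g - g', x - x'⟫_ℝ := by
  have hsum : f x + ((⟪g, x' - x⟫_ℝ + ⟪g', x - x'⟫_ℝ : ℝ) : EReal) ≤ f x :=
    calc f x + ((⟪g, x' - x⟫_ℝ + ⟪g', x - x'⟫_ℝ : ℝ) : EReal)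
        = f x + (⟪g, x' - x⟫_ℝ : ℝ) + (⟪g', x - x'⟫_ℝ : ℝ) := by rw [EReal.coe_add, add_assoc]
      _ ≤ f x' + (⟪g', x - x'⟫_ℝ : ℝ) := by gcongr; exact h x'
      _ ≤ f x := h' x
  lift f x to ℝ using ⟨htop, hbot⟩ with a
  norm_cast at hsum
  rw [← neg_sub x x', inner_neg_right] at hsum
  rw [inner_sub_left]
  linarith

theorem IsSubgradientAt.isSubgradientAt_moreauEnvelope
    (h : IsSubgradientAt f (ε⁻¹ • (x - p)) p) (hε : 0 ≤ ε) :
    IsSubgradientAt (moreauEnvelope f ε) (ε⁻¹ • (x - p)) x := by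
  refine fun y ↦ le_iInf fun z ↦ ?_
  set g := ε⁻¹ • (x - p) with hg
  have hquad : 1 / (2 * ε) * ‖x - p‖ ^ 2 + ⟪g, y - x⟫_ℝ ≤
      ⟪g, z - p⟫_ℝ + 1 / (2 * ε) * ‖y - z‖ ^ 2 := by
    have hsplit : y - z = (x - p) + ((y - x) - (z - p)) := by abel
    have hrem : 0 ≤ 1 / (2 * ε) * ‖(y - x) - (z - p)‖ ^ 2 := by positivity
    rw [hsplit, one_div_two_mul_norm_add_sq, ← hg, inner_sub_right g (y - x)]
    linarith
  calc moreauEnvelope f ε x + (⟪g, y - x⟫_ℝ : ℝ)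
      ≤ f p + ((1 / (2 * ε) * ‖x - p‖ ^ 2 : ℝ) : EReal) + (⟪g, y - x⟫_ℝ : ℝ) := by
        gcongr; exact iInf_le _ p
    _ = f p + ((1 / (2 * ε) * ‖x - p‖ ^ 2 + ⟪g, y - x⟫_ℝ : ℝ) : EReal) := by
        rw [EReal.coe_add, add_assoc]
    _ ≤ f p + ((⟪g, z - p⟫_ℝ + 1 / (2 * ε) * ‖y - z‖ ^ 2 : ℝ) : EReal) := by gcongr
    _ = f p + (⟪g, z - p⟫_ℝ : ℝ) + ((1 / (2 * ε) * ‖y - z‖ ^ 2 : ℝ) : EReal) := by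
        rw [EReal.coe_add, add_assoc]
    _ ≤ f z + ((1 / (2 * ε) * ‖y - z‖ ^ 2 : ℝ) : EReal) := by gcongr; exact h z

namespace IsProxPt

theorem moreauEnvelope_eq (hp : IsProxPt f ε x p) :
    moreauEnvelope f ε x = f p + ((1 / (2 * ε) * ‖x - p‖ ^ 2 : ℝ) : EReal) :=
  le_antisymm (iInf_le _ p) (le_iInf hp)

theorem moreauEnvelope_le (hp : IsProxPt f ε x p) (y : H) :
    moreauEnvelope f ε y ≤ moreauEnvelope f ε x +
      ((⟪ε⁻¹ • (x - p), y - x⟫_ℝ + 1 / (2 * ε) * ‖y - x‖ ^ 2 : ℝ) : EReal) := by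
  have hsplit : y - p = (x - p) + (y - x) := by abel
  calc moreauEnvelope f ε y
      ≤ f p + ((1 / (2 * ε) * ‖y - p‖ ^ 2 : ℝ) : EReal) := iInf_le _ p
    _ = _ := by
      rw [hp.moreauEnvelope_eq, hsplit, one_div_two_mul_norm_add_sq, add_assoc, add_assoc,
        ← EReal.coe_add]

theorem ne_top (hp : IsProxPt f ε x p) (h : moreauEnvelope f ε x ≠ ⊤) : f p ≠ ⊤ := by
  intro htop
  exact h (by rw [hp.moreauEnvelope_eq, htop, EReal.top_add_coe])

theorem ne_bot (hp : IsProxPt f ε x p) (h : moreauEnvelope f ε x ≠ ⊥) : f p ≠ ⊥ := by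
  intro hbot
  exact h (by rw [hp.moreauEnvelope_eq, hbot, EReal.bot_add])

theorem add_inner_le_add_mul_of_convexE (hp : IsProxPt f ε x p) (hf : ConvexE f) {z : H} {a b t : ℝ}
    (ha : f p = a) (hb : f z = b) (ht : t ∈ Set.Ioo (0 : ℝ) 1) :
    a + ⟪ε⁻¹ • (x - p), z - p⟫_ℝ ≤ b + t * (1 / (2 * ε) * ‖z - p‖ ^ 2) := by
  obtain ⟨ht₀, ht₁⟩ := ht
  have hseg : x - ((1 - t) • p + t • z) = (x - p) + (-t) • (z - p) := by module
  have hmin := (hp ((1 - t) • p + t • z)).trans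
    (add_le_add_left (hf p z (1 - t) t (by linarith) ht₀.le (by ring)) _)
  rw [ha, hb, hseg, one_div_two_mul_norm_add_sq, inner_smul_right, norm_smul, mul_pow,
    Real.norm_eq_abs, sq_abs] at hmin
  norm_cast at hmin
  refine le_of_mul_le_mul_left ?_ ht₀
  linarith

theorem add_inner_le_of_convexE (hp : IsProxPt f ε x p) (hf : ConvexE f) {z : H} {a b : ℝ}
    (ha : f p = a) (hb : f z = b) : a + ⟪ε⁻¹ • (x - p), z - p⟫_ℝ ≤ b := by
  have hlim : Filter.Tendsto (fun t : ℝ ↦ b + t * (1 / (2 * ε) * ‖z - p‖ ^ 2)) (𝓝[>] 0) (𝓝 b) := by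
    refine tendsto_nhdsWithin_of_tendsto_nhds (Continuous.tendsto' (by fun_prop) _ _ ?_)
    rw [zero_mul, add_zero]
  refine ge_of_tendsto hlim ?_
  filter_upwards [Ioo_mem_nhdsGT zero_lt_one] with t ht
  exact hp.add_inner_le_add_mul_of_convexE hf ha hb ht

theorem isSubgradientAt (hp : IsProxPt f ε x p) (hf : ConvexE f) :
    IsSubgradientAt f (ε⁻¹ • (x - p)) p := by
  intro z
  have hpz := hp z
  induction ha : f p with
  | bot => simp only [EReal.bot_add, bot_le]
  | top =>
    rw [ha, EReal.top_add_coe, top_le_iff] at hpz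
    have hz : f z = ⊤ := by
      by_contra hne
      exact EReal.add_ne_top hne (EReal.coe_ne_top _) hpz
    exact le_of_le_of_eq le_top hz.symm
  | coe a =>
    induction hb : f z with
    | top => exact le_top
    | bot =>
      rw [ha, hb, EReal.bot_add, le_bot_iff, ← EReal.coe_add] at hpz
      exact absurd hpz (EReal.coe_ne_bot _)
    | coe b => exact_mod_cast hp.add_inner_le_of_convexE hf ha hb

theorem norm_sub_sub_sub_le (hp : IsProxPt f ε x p) (hp' : IsProxPt f ε x' p') (hf : ConvexE f)
    (hε : 0 < ε) (hbot : f p ≠ ⊥) (htop : f p ≠ ⊤) : ‖(x - p) - (x' - p')‖ ≤ ‖x - x'‖ := by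
  have hmono := (hp.isSubgradientAt hf).inner_sub_sub_nonneg (hp'.isSubgradientAt hf) hbot htop
  rw [← smul_sub, real_inner_smul_left] at hmono
  have hsplit : x - x' = ((x - p) - (x' - p')) + (p - p') := by abel
  rw [hsplit]
  exact norm_le_norm_add_of_inner_nonneg (nonneg_of_mul_nonneg_right hmono (inv_pos.mpr hε))

theorem hasFDerivAt (hp : IsProxPt f ε x p) (hf : ConvexE f) (hε : 0 ≤ ε) {m : H → ℝ}
    (hm : ∀ y, (m y : EReal) = moreauEnvelope f ε y) :
    HasFDerivAt m (innerSL ℝ (ε⁻¹ • (x - p))) x := by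
  refine hasFDerivAt_of_norm_sub_le_mul_sq (C := 1 / (2 * ε)) fun y ↦ ?_
  have hlower := (hp.isSubgradientAt hf).isSubgradientAt_moreauEnvelope hε y
  have hupper := hp.moreauEnvelope_le y
  rw [← hm, ← hm] at hlower hupper
  norm_cast at hlower hupper
  rw [innerSL_apply_apply, Real.norm_of_nonneg (by linarith)]
  linarith

end IsProxPt

theorem stmt16_general (hconv : ConvexE f) (hε : 0 < ε) {m : H → ℝ}
    (hm : ∀ x : H, (m x : EReal) = moreauEnvelope f ε x) :
    (∀ x p : H, IsProxPt f ε x p → HasFDerivAt m (innerSL ℝ (ε⁻¹ • (x - p))) x) ∧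
    (∀ x x' p p' : H, IsProxPt f ε x p → IsProxPt f ε x' p' →
      ‖ε⁻¹ • (x - p) - ε⁻¹ • (x' - p')‖ ≤ ε⁻¹ * ‖x - x'‖) := by
  refine ⟨fun x p hp ↦ hp.hasFDerivAt hconv hε.le hm, fun x x' p p' hp hp' ↦ ?_⟩
  have hbot : f p ≠ ⊥ := hp.ne_bot (hm x ▸ EReal.coe_ne_bot _)
  have htop : f p ≠ ⊤ := hp.ne_top (hm x ▸ EReal.coe_ne_top _)
  rw [← smul_sub, norm_smul, Real.norm_of_nonneg (inv_nonneg.mpr hε.le)]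
  gcongr
  exact hp.norm_sub_sub_sub_le hp' hconv hε hbot htop

end

/-- the Moreau envelope `ᵋf` (here `m`, its real-valued version) is
Fréchet differentiable everywhere, with gradient `∇ᵋf(x) = ε⁻¹(x − Prox_{εf}(x))`,
and the gradient map is Lipschitz continuous with constant `ε⁻¹`. -/
theorem stmt16 {H : Type*} [NormedAddCommGroup H] [InnerProductSpace ℝ H]
    [CompleteSpace H]
    (f : H → EReal) (hbot : ∀ z, f z ≠ ⊥) (hproper : ∃ z, f z ≠ ⊤)
    (hconv : ConvexE f) (hlsc : LowerSemicontinuous f)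
    (ε : ℝ) (hε : 0 < ε) (m : H → ℝ)
    (hm : ∀ x : H, (m x : EReal) = ⨅ z : H, f z + ((1 / (2 * ε) * ‖x - z‖ ^ 2 : ℝ) : EReal)) :
    (∀ x p : H, IsProxPt f ε x p → HasGradientAt m (ε⁻¹ • (x - p)) x) ∧
    (∀ x x' p p' : H, IsProxPt f ε x p → IsProxPt f ε x' p' →
      ‖ε⁻¹ • (x - p) - ε⁻¹ • (x' - p')‖ ≤ ε⁻¹ * ‖x - x'‖) := by
  exact stmt16_general hconv hε hm
end
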